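/- For any ADF D and any two interpretations v and w of D, if v ≤_i w then Γ_D(v) ≤_i Γ_D(w), i.e., the characteristic operator Γ_D is monotone with respect to the information ordering. -/

import Mathlib

/-- Three truth values: true, false, undecided. -/
inductive TV : Type
  | t | f | u
deriving DecidableEq, Repr

/-- The information order on truth values: u <_i t and u <_i f. -/
def TV.ile (x y : TV) : Prop := x = TV.u ∨ x = y

/-- The information order on interpretations, extended pointwise. -/
def ILE {A : Type*} (v w : A → TV) : Prop := ∀ a, TV.ile (v a) (w a)

/-- An abstract dialectical framework on a set of arguments `A`:
each argument `a` has an acceptance condition `C a : (A → Bool) → Bool`. -/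
structure ADF (A : Type*) where
  C : A → (A → Bool) → Bool

/-- The trivial interpretation mapping every argument to undecided. -/
def trivialInterp (A : Type*) : A → TV := fun _ => TV.u

/-- The parents of `a` are the arguments on which its acceptance condition depends. -/
def ADF.parents {A : Type*} [DecidableEq A] (D : ADF A) (a : A) : Set A :=
  {b | ∃ w : A → Bool, D.C a w ≠ D.C a (Function.update w b (!w b))}

/-- A two-valued assignment `w` completes a three-valued interpretation `v`. -/
def Completes {A : Type*} (w : A → Bool) (v : A → TV) : Prop :=
  ∀ b, (v b = TV.t → w b = true) ∧ (v b = TV.f → w b = false)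

/-- `φ` is irrefutable under `v`: every completion of `v` makes `φ` true. -/
def Irrefutable {A : Type*} (φ : (A → Bool) → Bool) (v : A → TV) : Prop :=
  ∀ w : A → Bool, Completes w v → φ w = true

/-- `φ` is unsatisfiable under `v`: every completion of `v` makes `φ` false. -/
def Unsat {A : Type*} (φ : (A → Bool) → Bool) (v : A → TV) : Prop :=
  ∀ w : A → Bool, Completes w v → φ w = false

open Classical in
/-- The characteristic operator Γ_D of an ADF. -/
noncomputable def Gamma {A : Type*} (D : ADF A) (v : A → TV) : A → TV := fun a =>
  if Irrefutable (D.C a) v then TV.t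
  else if Unsat (D.C a) v then TV.f
  else TV.u

open Classical in
/-- `v|_P`: agrees with `v` on `P` and is undecided elsewhere. -/
noncomputable def restrictTV {A : Type*} (v : A → TV) (P : Set A) : A → TV :=
  fun b => if b ∈ P then v b else TV.u

/-- Strong acceptability/deniability of an argument with respect to interpretation `v`
and set `S`, relative to an excluded set `E` (the first index). An argument `a` with
`v a = t` (resp. `v a = f`) is strongly acceptable (resp. strongly deniable) iff there is
`P ⊆ (parents a ∩ S) \ E` with `φ_a^{v|_P}` irrefutable (resp. unsatisfiable) and every
`p ∈ P` strongly acceptable/deniable relative to `E ∪ {p}`. -/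
inductive SJrel {A : Type*} [DecidableEq A] (D : ADF A) (v : A → TV) (S : Set A) :
    Set A → A → Prop
  | acc (E : Set A) (a : A) (P : Set A)
      (ha : v a = TV.t)
      (hP : P ⊆ (D.parents a ∩ S) \ E)
      (hirr : Irrefutable (D.C a) (restrictTV v P))
      (hrec : ∀ p ∈ P, SJrel D v S (E ∪ {p}) p) : SJrel D v S E a
  | den (E : Set A) (a : A) (P : Set A)
      (ha : v a = TV.f)
      (hP : P ⊆ (D.parents a ∩ S) \ E)
      (hunsat : Unsat (D.C a) (restrictTV v P))
      (hrec : ∀ p ∈ P, SJrel D v S (E ∪ {p}) p) : SJrel D v S E a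

/-- `a` is strongly acceptable/deniable w.r.t. `v` and `S`
(i.e., relative to the excluded set `{a}`). -/
def StronglyJustified {A : Type*} [DecidableEq A] (D : ADF A) (v : A → TV)
    (S : Set A) (a : A) : Prop :=
  SJrel D v S {a} a

/-- `S` is a least set for `a` with respect to `v`. -/
def LeastSet {A : Type*} [DecidableEq A] (D : ADF A) (v : A → TV)
    (a : A) (S : Set A) : Prop :=
  StronglyJustified D v S a ∧
  ∀ S' : Set A, S'.ncard < S.ncard → ¬ StronglyJustified D v S' a

/-- An interpretation is strongly admissible iff every argument assigned `t`/`f`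
is strongly acceptable/deniable w.r.t. `v` and some set `S`. -/
def StronglyAdmissible {A : Type*} [DecidableEq A] (D : ADF A) (v : A → TV) : Prop :=
  ∀ a : A, v a ≠ TV.u → ∃ S : Set A, StronglyJustified D v S a

/-- `g` is the grounded interpretation of `D`: the least fixed point of `Γ_D`. -/
def IsGrounded {A : Type*} (D : ADF A) (g : A → TV) : Prop :=
  Gamma D g = g ∧ ∀ w : A → TV, Gamma D w = w → ILE g w

/-- An interpretation is admissible iff `v ≤_i Γ_D(v)`. -/
def Admissible {A : Type*} (D : ADF A) (v : A → TV) : Prop :=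
  ILE v (Gamma D v)

/-- An interpretation is conflict-free. -/
def ConflictFree {A : Type*} (D : ADF A) (v : A → TV) : Prop :=
  ∀ a : A, (v a = TV.t → ∃ w : A → Bool, Completes w v ∧ D.C a w = true) ∧
           (v a = TV.f → Unsat (D.C a) v)

/-- The join of two interpretations: take `v`'s value where defined, else `w`'s. -/
def joinI {A : Type*} (v w : A → TV) : A → TV :=
  fun a => if v a = TV.u then w a else v a

/-! Passing from `v` to a more informative `w` only removes completions, so whatever holds for all
completions of `v` holds for all completions of `w`. Since every interpretation has a completion, no
condition is both irrefutable and unsatisfiable, so the order in which `Gamma` tests the two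
properties is immaterial and each decided value of `Gamma D v` persists in `Gamma D w`. -/

section Completions

variable {A : Type*} {φ : (A → Bool) → Bool} {v w : A → TV}

theorem Completes.of_ile {x : A → Bool} (hx : Completes x w) (h : ILE v w) : Completes x v := by
  intro b
  rcases h b with hb | hb
  · simp [hb]
  · rw [hb]
    exact hx b

theorem exists_completes (v : A → TV) : ∃ x : A → Bool, Completes x v :=
  ⟨fun b => decide (v b = TV.t), fun b => ⟨fun hb => by simp [hb], fun hb => by simp [hb]⟩⟩

theorem Irrefutable.mono (hφ : Irrefutable φ v) (h : ILE v w) : Irrefutable φ w :=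
  fun x hx => hφ x (hx.of_ile h)

theorem Unsat.mono (hφ : Unsat φ v) (h : ILE v w) : Unsat φ w :=
  fun x hx => hφ x (hx.of_ile h)

theorem Unsat.not_irrefutable (hφ : Unsat φ v) : ¬ Irrefutable φ v := by
  intro hirr
  obtain ⟨x, hx⟩ := exists_completes v
  exact Bool.false_ne_true ((hφ x hx).symm.trans (hirr x hx))

end Completions

section CharacteristicOperator

variable {A : Type*} {D : ADF A} {v : A → TV} {a : A}

theorem gamma_eq_t_iff : Gamma D v a = TV.t ↔ Irrefutable (D.C a) v := by
  unfold Gamma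
  split_ifs <;> simp_all

theorem gamma_eq_f_iff : Gamma D v a = TV.f ↔ Unsat (D.C a) v := by
  have hdisjoint : Unsat (D.C a) v → ¬ Irrefutable (D.C a) v := Unsat.not_irrefutable
  unfold Gamma
  split_ifs <;> simp_all

end CharacteristicOperator

theorem gamma_monotone_general {A : Type*} (D : ADF A) (v w : A → TV) (h : ILE v w) :
    ILE (Gamma D v) (Gamma D w) := by
  intro a
  cases hv : Gamma D v a with
  | t =>
    have hw : Irrefutable (D.C a) w := (gamma_eq_t_iff.mp hv).mono h
    exact Or.inr (gamma_eq_t_iff.mpr hw).symm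
  | f =>
    have hw : Unsat (D.C a) w := (gamma_eq_f_iff.mp hv).mono h
    exact Or.inr (gamma_eq_f_iff.mpr hw).symm
  | u => exact Or.inl rfl

/-- The characteristic operator is monotone w.r.t. the information ordering. -/
theorem gamma_monotone {A : Type*} [Fintype A] [DecidableEq A] (D : ADF A)
    (v w : A → TV) (h : ILE v w) : ILE (Gamma D v) (Gamma D w) :=
  gamma_monotone_general D v w h
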